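/- Let n ≥ 1 and let f : ℝ^n → ℝ be a smooth function with 0 < a ≤ f ≤ b for some constants a, b and with bounded gradient. Then for every t ≥ 0 and every x ∈ ℝ^n, N_t(f log f)(x) − N_t f(x) · log N_t f(x) ≤ ((1 − e^{−2t})/2) · N_t(|∇f|²/f)(x) (local logarithmic Sobolev inequality for the Ornstein–Uhlenbeck semigroup). -/

import Mathlib

open MeasureTheory Real

noncomputable def gaussianMeasure (n : ℕ) : Measure (EuclideanSpace ℝ (Fin n)) :=
  volume.withDensity fun x => ENNReal.ofReal ((2 * π) ^ (-(n : ℝ) / 2) * Real.exp (-‖x‖ ^ 2 / 2))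

/-- Ornstein-Uhlenbeck semigroup via the Mehler formula. -/
noncomputable def OU (n : ℕ) (t : ℝ) (f : EuclideanSpace ℝ (Fin n) → ℝ)
    (x : EuclideanSpace ℝ (Fin n)) : ℝ :=
  ∫ y, f (Real.exp (-t) • x + Real.sqrt (1 - Real.exp (-2 * t)) • y) ∂(gaussianMeasure n)

/-!
Write `γ` for the standard Gaussian measure and `Q θ` for the semigroup at the time `t` with
`cos θ = exp (-t)`. The entropy `φ θ = ∫ Q θ f * log (Q θ f) ∂γ` runs from `∫ f * log f ∂γ` at
`θ = 0` to `(∫ f ∂γ) * log (∫ f ∂γ)` at `θ = π / 2`. Since `γ ⊗ γ` is invariant under the rotation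
of angle `θ`, an integration by parts in the second rotated variable gives
`φ' θ = -sin θ * cos θ * ∫ ‖Q θ ∇f‖² / Q θ f ∂γ`, with no second derivative of `f`. By the
Cauchy-Schwarz inequality and the invariance of `γ` under `Q θ`, the last integral is at most
`∫ ‖∇f‖² / f ∂γ`. Integrating over `θ` yields the logarithmic Sobolev inequality for `γ`, and the
local inequality at `x` is the case of the function `y ↦ f (exp (-t) • x + √(1 - exp (-2t)) • y)`.
-/

open ProbabilityTheory Filter InnerProductSpace
open scoped NNReal ENNReal RealInnerProductSpace

section Density

variable {E : Type*} [NormedAddCommGroup E] [InnerProductSpace ℝ E]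

/-- The density of the standard Gaussian measure of a Euclidean space with respect to its volume,
the multidimensional analogue of `gaussianPDFReal 0 1`. -/
noncomputable def stdGaussianPDFReal (x : E) : ℝ :=
  (2 * π) ^ (-(Module.finrank ℝ E : ℝ) / 2) * rexp (-‖x‖ ^ 2 / 2)

theorem stdGaussianPDFReal_nonneg (x : E) : 0 ≤ stdGaussianPDFReal x := by
  unfold stdGaussianPDFReal
  positivity

theorem continuous_stdGaussianPDFReal : Continuous (stdGaussianPDFReal : E → ℝ) := by
  unfold stdGaussianPDFReal
  fun_prop

variable [FiniteDimensional ℝ E]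

theorem hasGradientAt_stdGaussianPDFReal (x : E) :
    HasGradientAt stdGaussianPDFReal (-stdGaussianPDFReal x • x) x := by
  have hsq : HasFDerivAt (fun y : E => -‖y‖ ^ 2 / 2) (-innerSL ℝ x) x := by
    have hhalf := (hasStrictFDerivAt_norm_sq x).hasFDerivAt.const_mul (-1 / 2 : ℝ)
    refine (hhalf.congr_fderiv ?_).congr_of_eventuallyEq (.of_forall fun y => ?_)
    · module
    · ring
  refine hasGradientAt_iff_hasFDerivAt.2 ((hsq.exp.const_mul _).congr_fderiv ?_)
  ext y
  simp [stdGaussianPDFReal, mul_assoc]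

variable [MeasurableSpace E] [BorelSpace E]

theorem integrable_stdGaussianPDFReal : Integrable (stdGaussianPDFReal : E → ℝ) := by
  have h := (GaussianFourier.integrable_cexp_neg_mul_sq_norm_add (b := (1 / 2 : ℂ))
    (by norm_num) 0 (0 : E)).norm
  refine (h.congr (.of_forall fun x => ?_)).const_mul _
  have hexp : -(1 / 2 : ℂ) * ‖x‖ ^ 2 + 0 * ⟪0, x⟫ = (-‖x‖ ^ 2 / 2 : ℝ) := by push_cast; ring
  simp only [hexp, ← Complex.ofReal_exp, Complex.norm_of_nonneg (exp_nonneg _)]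

theorem integral_cexp_inner_mul_stdGaussianPDFReal (t : E) :
    ∫ x : E, stdGaussianPDFReal x • Complex.exp (⟪x, t⟫ * Complex.I) =
      Complex.exp (-‖t‖ ^ 2 / 2) := by
  have hFourier := GaussianFourier.integral_cexp_neg_mul_sq_norm_add (b := (1 / 2 : ℂ))
    (by norm_num) Complex.I t
  have hnormalization : ((2 * π) ^ (-(Module.finrank ℝ E : ℝ) / 2) : ℝ) *
      (π / (1 / 2) : ℂ) ^ (Module.finrank ℝ E / 2 : ℂ) = 1 := by
    have hbase : (π / (1 / 2) : ℂ) = (2 * π : ℝ) := by push_cast; ring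
    have hexp : (Module.finrank ℝ E / 2 : ℂ) = (Module.finrank ℝ E / 2 : ℝ) := by push_cast; rfl
    rw [hbase, hexp, ← Complex.ofReal_cpow (by positivity), ← Complex.ofReal_mul,
      ← rpow_add (by positivity), neg_div, neg_add_cancel, rpow_zero, Complex.ofReal_one]
  calc ∫ x : E, stdGaussianPDFReal x • Complex.exp (⟪x, t⟫ * Complex.I)
      = ∫ x : E, ((2 * π) ^ (-(Module.finrank ℝ E : ℝ) / 2) : ℝ) *
          Complex.exp (-(1 / 2) * ‖x‖ ^ 2 + Complex.I * ⟪t, x⟫) := by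
        refine integral_congr_ae (.of_forall fun x => ?_)
        simp only [stdGaussianPDFReal, Complex.real_smul, Complex.ofReal_mul, Complex.ofReal_exp,
          mul_assoc, ← Complex.exp_add, real_inner_comm t x]
        congr 2
        push_cast
        ring
    _ = Complex.exp (-‖t‖ ^ 2 / 2) := by
        rw [integral_const_mul, hFourier, ← mul_assoc, hnormalization, one_mul, Complex.I_sq]
        congr 1
        ring

theorem stdGaussian_eq_withDensity :
    stdGaussian E = volume.withDensity fun x => ENNReal.ofReal (stdGaussianPDFReal x) := by
  have : IsFiniteMeasure (volume.withDensity fun x : E => ENNReal.ofReal (stdGaussianPDFReal x)) :=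
    isFiniteMeasure_withDensity_ofReal integrable_stdGaussianPDFReal.hasFiniteIntegral
  refine Measure.ext_of_charFun (funext fun t => ?_)
  rw [charFun_stdGaussian, charFun_apply, integral_withDensity_eq_integral_toReal_smul
    continuous_stdGaussianPDFReal.measurable.ennreal_ofReal (by simp)]
  simp only [ENNReal.toReal_ofReal (stdGaussianPDFReal_nonneg _),
    integral_cexp_inner_mul_stdGaussianPDFReal]

theorem integral_stdGaussian_eq_integral_smul {F : Type*} [NormedAddCommGroup F] [NormedSpace ℝ F]
    (g : E → F) :
    ∫ x, g x ∂stdGaussian E = ∫ x, stdGaussianPDFReal x • g x := by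
  rw [stdGaussian_eq_withDensity, integral_withDensity_eq_integral_toReal_smul
    continuous_stdGaussianPDFReal.measurable.ennreal_ofReal (by simp)]
  simp only [ENNReal.toReal_ofReal (stdGaussianPDFReal_nonneg _)]

theorem integrable_stdGaussian_iff {F : Type*} [NormedAddCommGroup F] [NormedSpace ℝ F]
    {g : E → F} :
    Integrable g (stdGaussian E) ↔ Integrable fun x => stdGaussianPDFReal x • g x := by
  rw [stdGaussian_eq_withDensity, integrable_withDensity_iff_integrable_smul'
    continuous_stdGaussianPDFReal.measurable.ennreal_ofReal (by simp)]
  simp only [ENNReal.toReal_ofReal (stdGaussianPDFReal_nonneg _)]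

theorem integral_mul_inner_stdGaussian {h : E → ℝ} {h' : E → E}
    (hh : ∀ x, HasGradientAt h (h' x) x) (v : E) (hi : Integrable h (stdGaussian E))
    (hi' : Integrable (fun x => ⟪h' x, v⟫) (stdGaussian E))
    (hiv : Integrable (fun x => h x * ⟪v, x⟫) (stdGaussian E)) :
    ∫ x, h x * ⟪v, x⟫ ∂stdGaussian E = ∫ x, ⟪h' x, v⟫ ∂stdGaussian E := by
  rw [integrable_stdGaussian_iff] at hi hi' hiv
  have hinner (x : E) : ⟪-stdGaussianPDFReal x • x, v⟫ * h x =
      -(stdGaussianPDFReal x • (h x * ⟪v, x⟫)) := by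
    rw [real_inner_smul_left, real_inner_comm, smul_eq_mul]
    ring
  have hparts := integral_bilinear_hasFDerivAt_right_eq_neg_left_of_integrable
    (B := ContinuousLinearMap.mul ℝ ℝ)
    (hiv.neg.congr (.of_forall fun x => (hinner x).symm)) hi' hi
    (fun x _ => (hasGradientAt_stdGaussianPDFReal x).hasFDerivAt)
    fun x _ => (hh x).hasFDerivAt
  simp only [ContinuousLinearMap.mul_apply', toDual_apply_apply, hinner, integral_neg,
    neg_neg] at hparts
  simpa only [integral_stdGaussian_eq_integral_smul, smul_eq_mul] using hparts.symm

end Density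

theorem abs_log_sub_log_le {a u v : ℝ} (ha : 0 < a) (hu : a ≤ u) (hv : a ≤ v) :
    |log u - log v| ≤ |u - v| / a := by
  have hlt {u v : ℝ} (hu : a ≤ u) (hv : a ≤ v) : log u - log v ≤ |u - v| / a := by
    have hu0 := ha.trans_le hu
    have hv0 := ha.trans_le hv
    calc log u - log v = log (u / v) := (log_div hu0.ne' hv0.ne').symm
      _ ≤ u / v - 1 := log_le_sub_one_of_pos (by positivity)
      _ = (u - v) / v := by rw [sub_div, div_self hv0.ne']
      _ ≤ |u - v| / a := by gcongr; exact le_abs_self _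
  exact abs_sub_le_iff.2 ⟨hlt hu hv, abs_sub_comm u v ▸ hlt hv hu⟩

theorem sq_norm_integral_div_integral_le {α E : Type*} [MeasurableSpace α] [NormedAddCommGroup E]
    [NormedSpace ℝ E] {μ : Measure α} {u : α → E} {v : α → ℝ} (hv : ∀ x, 0 < v x)
    (hui : Integrable u μ) (hvi : Integrable v μ) (huvi : Integrable (fun x => ‖u x‖ ^ 2 / v x) μ) :
    ‖∫ x, u x ∂μ‖ ^ 2 / ∫ x, v x ∂μ ≤ ∫ x, ‖u x‖ ^ 2 / v x ∂μ := by
  set M := ∫ x, v x ∂μ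
  have hM : 0 ≤ M := integral_nonneg fun x => (hv x).le
  set r := (∫ x, ‖u x‖ ∂μ) / M
  -- The left side is the tangent plane of the convex function `p ^ 2 / q` along `p = r * q`.
  have htangent (x : α) : 2 * r * ‖u x‖ - r ^ 2 * v x ≤ ‖u x‖ ^ 2 / v x := by
    rw [le_div_iff₀ (hv x)]
    linarith [sq_nonneg (‖u x‖ - r * v x)]
  calc ‖∫ x, u x ∂μ‖ ^ 2 / M ≤ (∫ x, ‖u x‖ ∂μ) ^ 2 / M := by
        gcongr
        exact norm_integral_le_integral_norm u
    _ = 2 * r * (∫ x, ‖u x‖ ∂μ) - r ^ 2 * M := by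
        rcases hM.eq_or_lt with hM | hM
        · simp [r, ← hM]
        · simp only [r]
          field_simp
          ring
    _ = ∫ x, (2 * r * ‖u x‖ - r ^ 2 * v x) ∂μ := by
        rw [integral_sub (hui.norm.const_mul _) (hvi.const_mul _), integral_const_mul,
          integral_const_mul]
    _ ≤ ∫ x, ‖u x‖ ^ 2 / v x ∂μ :=
        integral_mono ((hui.norm.const_mul _).sub (hvi.const_mul _)) huvi htangent

section Integrability

variable {α E F : Type*} [MeasurableSpace α] [NormedAddCommGroup E] [NormedAddCommGroup F]
  {μ : Measure α} [IsFiniteMeasure μ]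

theorem memLp_comp_of_lipschitzWith {p : ℝ≥0∞} {K : ℝ≥0} {f : E → F} (hf : LipschitzWith K f)
    {g : α → E} (hg : MemLp g p μ) : MemLp (fun x => f (g x)) p μ := by
  have hf₀ : LipschitzWith K fun x => f x - f 0 :=
    .of_dist_le_mul fun x y => by simpa only [dist_sub_right] using hf.dist_le_mul x y
  exact ((hf₀.comp_memLp (sub_self _) hg).add (memLp_const (f 0))).ae_eq
    (.of_forall fun x => sub_add_cancel (f (g x)) (f 0))

theorem integrable_of_continuous_of_norm_le [TopologicalSpace α] [OpensMeasurableSpace α]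
    [SecondCountableTopology α] {f : α → E} {K : ℝ} (hf : Continuous f) (hK : ∀ x, ‖f x‖ ≤ K) :
    Integrable f μ :=
  .of_bound hf.aestronglyMeasurable K (.of_forall hK)

theorem integrable_inner_of_continuous_of_norm_le [InnerProductSpace ℝ E] [TopologicalSpace α]
    [OpensMeasurableSpace α] [SecondCountableTopology α] {U V : α → E} {K L : ℝ≥0}
    (hU : Continuous U) (hK : ∀ x, ‖U x‖ ≤ K) (hV : Continuous V) (hL : ∀ x, ‖V x‖ ≤ L) :
    Integrable (fun x => ⟪U x, V x⟫) μ :=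
  integrable_of_continuous_of_norm_le (K := K * L) (hU.inner hV) fun x => by
    grw [norm_inner_le_norm, hK, hL]

end Integrability

section BoundedGradient

variable {E : Type*} [NormedAddCommGroup E] [InnerProductSpace ℝ E] [CompleteSpace E]

/-- `f` is continuously differentiable with gradient `f'` and `‖f'‖ ≤ K`: the class of functions
on which the Gaussian interpolation is run. The gradient is a parameter, as in `HasGradientAt`. -/
structure HasBoundedContGradient (f : E → ℝ) (f' : E → E) (K : ℝ≥0) : Prop where
  hasGradientAt : ∀ x, HasGradientAt f (f' x) x
  continuous_gradient : Continuous f'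
  norm_gradient_le : ∀ x, ‖f' x‖ ≤ K

namespace HasBoundedContGradient

variable {f : E → ℝ} {f' : E → E} {K : ℝ≥0}

theorem lipschitzWith (hf : HasBoundedContGradient f f' K) : LipschitzWith K f :=
  lipschitzWith_of_nnnorm_fderiv_le (𝕜 := ℝ) (fun x => (hf.hasGradientAt x).differentiableAt)
    fun x => by
      rw [(hf.hasGradientAt x).hasFDerivAt.fderiv, LinearIsometryEquiv.nnnorm_map]
      exact hf.norm_gradient_le x

theorem continuous (hf : HasBoundedContGradient f f' K) : Continuous f :=
  hf.lipschitzWith.continuous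

theorem of_contDiff {C : ℝ≥0} (hf : ContDiff ℝ 1 f) (hC : ∀ x, ‖gradient f x‖ ≤ C) :
    HasBoundedContGradient f (gradient f) C where
  hasGradientAt x := ((hf.differentiable one_ne_zero) x).hasGradientAt
  continuous_gradient := (toDual ℝ E).symm.continuous.comp (hf.continuous_fderiv one_ne_zero)
  norm_gradient_le := hC

theorem comp_add_smul (hf : HasBoundedContGradient f f' K) (v : E) (s : ℝ) :
    HasBoundedContGradient (fun x => f (v + s • x)) (fun x => s • f' (v + s • x)) (‖s‖₊ * K) where
  hasGradientAt x := by
    have haffine : HasFDerivAt (fun y => v + s • y) (s • ContinuousLinearMap.id ℝ E) x :=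
      ((hasFDerivAt_id x).const_smul s).const_add v
    refine hasGradientAt_iff_hasFDerivAt.2
      (((hf.hasGradientAt _).hasFDerivAt.comp x haffine).congr_fderiv ?_)
    ext y
    simp
  continuous_gradient := by
    have hc := hf.continuous_gradient
    fun_prop
  norm_gradient_le x := by
    rw [norm_smul, NNReal.coe_mul, coe_nnnorm]
    gcongr
    exact hf.norm_gradient_le _

theorem log (hf : HasBoundedContGradient f f' K) {a : ℝ≥0} (ha : 0 < a) (haf : ∀ x, a ≤ f x) :
    HasBoundedContGradient (fun x => log (f x)) (fun x => (f x)⁻¹ • f' x) (K / a) where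
  hasGradientAt x := by
    have hpos : f x ≠ 0 := ((NNReal.coe_pos.2 ha).trans_le (haf x)).ne'
    refine hasGradientAt_iff_hasFDerivAt.2
      (((hf.hasGradientAt x).hasFDerivAt.log hpos).congr_fderiv ?_)
    simp
  continuous_gradient :=
    (hf.continuous.inv₀ fun x => ((NNReal.coe_pos.2 ha).trans_le (haf x)).ne').smul
      hf.continuous_gradient
  norm_gradient_le x := by
    have hpos : (0 : ℝ) < a := NNReal.coe_pos.2 ha
    rw [norm_smul, norm_inv, norm_of_nonneg (hpos.le.trans (haf x)), inv_mul_eq_div,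
      NNReal.coe_div]
    exact div_le_div₀ K.coe_nonneg (hf.norm_gradient_le x) hpos (haf x)

theorem add_const (hf : HasBoundedContGradient f f' K) (c : ℝ) :
    HasBoundedContGradient (fun x => f x + c) f' K where
  hasGradientAt x := hasGradientAt_iff_hasFDerivAt.2 ((hf.hasGradientAt x).hasFDerivAt.add_const c)
  continuous_gradient := hf.continuous_gradient
  norm_gradient_le := hf.norm_gradient_le

theorem continuous_sq_norm_gradient_div (hf : HasBoundedContGradient f f' K) {a : ℝ≥0}
    (ha : 0 < a) (haf : ∀ x, a ≤ f x) : Continuous fun x => ‖f' x‖ ^ 2 / f x :=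
  (hf.continuous_gradient.norm.pow 2).div hf.continuous fun x =>
    ((NNReal.coe_pos.2 ha).trans_le (haf x)).ne'

theorem norm_sq_norm_gradient_div_le (hf : HasBoundedContGradient f f' K) {a : ℝ≥0}
    (ha : 0 < a) (haf : ∀ x, a ≤ f x) (x : E) : ‖‖f' x‖ ^ 2 / f x‖ ≤ K ^ 2 / a := by
  have ha' : (0 : ℝ) < a := NNReal.coe_pos.2 ha
  rw [norm_of_nonneg (div_nonneg (sq_nonneg _) (ha'.le.trans (haf x)))]
  exact div_le_div₀ (by positivity) (by grw [hf.norm_gradient_le]) ha' (haf x)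

end HasBoundedContGradient

end BoundedGradient

section Rotation

theorem rotation_rotation_neg {E : Type*} [NormedAddCommGroup E] [InnerProductSpace ℝ E] (θ : ℝ)
    (p : E × E) : ContinuousLinearMap.rotation θ (ContinuousLinearMap.rotation (-θ) p) = p := by
  have hsq := cos_sq_add_sin_sq θ
  ext <;> simp only [ContinuousLinearMap.rotation_apply, cos_neg, sin_neg, smul_add, smul_smul]
  · linear_combination (norm := module) hsq • p.1
  · linear_combination (norm := module) hsq • p.2

variable {E : Type*} [NormedAddCommGroup E] [InnerProductSpace ℝ E] [FiniteDimensional ℝ E]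
  [MeasurableSpace E] [BorelSpace E]

theorem HasBoundedContGradient.memLp_two {f : E → ℝ} {f' : E → E} {K : ℝ≥0}
    (hf : HasBoundedContGradient f f' K) : MemLp f 2 (stdGaussian E) :=
  memLp_comp_of_lipschitzWith hf.lipschitzWith (IsGaussian.memLp_id _ 2 ENNReal.ofNat_ne_top)

theorem HasBoundedContGradient.integral_mul_inner {f : E → ℝ} {f' : E → E} {K : ℝ≥0}
    (hf : HasBoundedContGradient f f' K) (v : E) :
    ∫ x, f x * ⟪v, x⟫ ∂stdGaussian E = ∫ x, ⟪f' x, v⟫ ∂stdGaussian E :=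
  integral_mul_inner_stdGaussian hf.hasGradientAt v (hf.memLp_two.integrable one_le_two)
    ((integrable_of_continuous_of_norm_le hf.continuous_gradient hf.norm_gradient_le).inner_const v)
    (hf.memLp_two.integrable_mul
      ((IsGaussian.memLp_id _ 2 ENNReal.ofNat_ne_top).const_inner v))

theorem measurePreserving_rotation_stdGaussian (θ : ℝ) :
    MeasurePreserving (ContinuousLinearMap.rotation θ)
      ((stdGaussian E).prod (stdGaussian E)) ((stdGaussian E).prod (stdGaussian E)) :=
  ⟨(ContinuousLinearMap.rotation θ).continuous.measurable,
    IsGaussian.map_rotation_eq_self integral_id_stdGaussian θ⟩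

theorem integral_comp_rotation_stdGaussian {F : Type*} [NormedAddCommGroup F] [NormedSpace ℝ F]
    {g : E × E → F} (θ : ℝ)
    (hg : AEStronglyMeasurable g ((stdGaussian E).prod (stdGaussian E))) :
    ∫ p, g (ContinuousLinearMap.rotation θ p) ∂(stdGaussian E).prod (stdGaussian E) =
      ∫ p, g p ∂(stdGaussian E).prod (stdGaussian E) := by
  have hrot := measurePreserving_rotation_stdGaussian (E := E) θ
  rw [← integral_map hrot.aemeasurable (hrot.map_eq.symm ▸ hg), hrot.map_eq]

theorem memLp_rotation_stdGaussian (θ : ℝ) {p : ℝ≥0∞} (hp : p ≠ ∞) :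
    MemLp (ContinuousLinearMap.rotation θ) p ((stdGaussian E).prod (stdGaussian E)) :=
  (IsGaussian.memLp_id _ p hp).comp_measurePreserving (measurePreserving_rotation_stdGaussian θ)

theorem integrable_mul_inner_prod_stdGaussian {h : E → ℝ} {V : E → E} {K L : ℝ≥0}
    (hh : LipschitzWith L h) (hV : Continuous V) (hK : ∀ x, ‖V x‖ ≤ K) (θ : ℝ) :
    Integrable (fun q : E × E => h (ContinuousLinearMap.rotation θ q).1 * ⟪V q.1, q.2⟫)
      ((stdGaussian E).prod (stdGaussian E)) := by
  have hid : MemLp (fun q : E × E => q) 2 ((stdGaussian E).prod (stdGaussian E)) :=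
    IsGaussian.memLp_id _ 2 ENNReal.ofNat_ne_top
  have hrot : MemLp (ContinuousLinearMap.rotation θ) 2 ((stdGaussian E).prod (stdGaussian E)) :=
    memLp_rotation_stdGaussian θ ENNReal.ofNat_ne_top
  refine (memLp_comp_of_lipschitzWith hh hrot.fst).integrable_mul
    (hid.snd.of_le_mul (c := K) (by fun_prop) (.of_forall fun q => ?_))
  grw [norm_inner_le_norm, hK]

theorem integrable_mul_inner_rotation_stdGaussian {h : E → ℝ} {V : E → E} {K L : ℝ≥0}
    (hh : LipschitzWith L h) (hV : Continuous V) (hK : ∀ x, ‖V x‖ ≤ K) (θ : ℝ) :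
    Integrable (fun p : E × E =>
        h p.1 * ⟪V (ContinuousLinearMap.rotation θ p).1, (ContinuousLinearMap.rotation θ p).2⟫)
      ((stdGaussian E).prod (stdGaussian E)) := by
  have hinv (p : E × E) :
      ContinuousLinearMap.rotation (-θ) (ContinuousLinearMap.rotation θ p) = p := by
    simpa only [neg_neg] using rotation_rotation_neg (-θ) p
  simpa only [Function.comp_def, hinv] using
    (measurePreserving_rotation_stdGaussian θ).integrable_comp_of_integrable
      (integrable_mul_inner_prod_stdGaussian hh hV hK (-θ))

theorem integral_mul_inner_prod_stdGaussian {h : E → ℝ} {h' V : E → E} {K L : ℝ≥0}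
    (hh : HasBoundedContGradient h h' L) (hV : Continuous V) (hK : ∀ x, ‖V x‖ ≤ K) (θ : ℝ) :
    ∫ q : E × E, h (ContinuousLinearMap.rotation θ q).1 * ⟪V q.1, q.2⟫
        ∂(stdGaussian E).prod (stdGaussian E) =
      sin θ * ∫ q : E × E, ⟪h' (ContinuousLinearMap.rotation θ q).1, V q.1⟫
        ∂(stdGaussian E).prod (stdGaussian E) := by
  have hi : Integrable (fun q : E × E => ⟪h' (ContinuousLinearMap.rotation θ q).1, V q.1⟫)
      ((stdGaussian E).prod (stdGaussian E)) := by
    have hc := hh.continuous_gradient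
    exact integrable_inner_of_continuous_of_norm_le (by fun_prop)
      (fun q => hh.norm_gradient_le _) (by fun_prop) fun q => hK _
  rw [integral_prod _ (integrable_mul_inner_prod_stdGaussian hh.lipschitzWith hV hK θ),
    integral_prod _ hi, ← integral_const_mul]
  refine integral_congr_ae (.of_forall fun u => ?_)
  simp only [ContinuousLinearMap.rotation_apply]
  rw [(hh.comp_add_smul (cos θ • u) (sin θ)).integral_mul_inner (V u)]
  simp only [real_inner_smul_left, integral_const_mul]

-- In the rotated variables `(u, w)` the vector `V u` does not depend on `w`, which is what allows
-- the integration by parts in `w`.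
theorem integral_mul_inner_rotation_stdGaussian {h : E → ℝ} {h' V : E → E} {K L : ℝ≥0}
    (hh : HasBoundedContGradient h h' L) (hV : Continuous V) (hK : ∀ x, ‖V x‖ ≤ K) (θ : ℝ) :
    ∫ p : E × E,
        h p.1 * ⟪V (ContinuousLinearMap.rotation θ p).1, (ContinuousLinearMap.rotation θ p).2⟫
        ∂(stdGaussian E).prod (stdGaussian E) =
      -sin θ * ∫ p : E × E, ⟪h' p.1, V (ContinuousLinearMap.rotation θ p).1⟫
        ∂(stdGaussian E).prod (stdGaussian E) := by
  have hc := hh.continuous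
  have hc' := hh.continuous_gradient
  rw [← integral_comp_rotation_stdGaussian (-θ) (Continuous.aestronglyMeasurable (by fun_prop)),
    ← integral_comp_rotation_stdGaussian (-θ)
      (g := fun p => ⟪h' p.1, V (ContinuousLinearMap.rotation θ p).1⟫)
      (Continuous.aestronglyMeasurable (by fun_prop))]
  simp only [rotation_rotation_neg]
  rw [integral_mul_inner_prod_stdGaussian hh hV hK, sin_neg]

end Rotation

section Mehler

theorem norm_cos_smul_add_sin_smul_le {E : Type*} [NormedAddCommGroup E] [NormedSpace ℝ E] (θ : ℝ)
    (x y : E) : ‖cos θ • x + sin θ • y‖ ≤ ‖x‖ + ‖y‖ := by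
  grw [norm_add_le, norm_smul, norm_smul, norm_eq_abs, norm_eq_abs, abs_cos_le_one,
    abs_sin_le_one, one_mul, one_mul]

theorem abs_inner_rotation_le {E : Type*} [NormedAddCommGroup E] [InnerProductSpace ℝ E]
    {V : E → E} {K : ℝ≥0} (hV : ∀ x, ‖V x‖ ≤ K) (θ : ℝ) (x y : E) :
    |⟪V (cos θ • x + sin θ • y), -sin θ • x + cos θ • y⟫| ≤ K * (‖x‖ + ‖y‖) := by
  have h := norm_cos_smul_add_sin_smul_le (θ + π / 2) x y
  rw [cos_add_pi_div_two, sin_add_pi_div_two] at h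
  grw [abs_real_inner_le_norm, hV, h]

variable {E : Type*} [NormedAddCommGroup E] [InnerProductSpace ℝ E] [FiniteDimensional ℝ E]
  [MeasurableSpace E] {F : Type*} [NormedAddCommGroup F] [NormedSpace ℝ F]

/-- The Ornstein-Uhlenbeck semigroup parametrised by the angle `θ` with `cos θ = exp (-t)`, acting
on vector-valued functions so as to apply to gradients as well. -/
noncomputable def mehler (θ : ℝ) (f : E → F) (x : E) : F :=
  ∫ y, f (cos θ • x + sin θ • y) ∂stdGaussian E

/-- The derivative in `θ` of `mehler θ f`, in terms of the gradient `f'` of `f`. -/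
noncomputable def mehlerDeriv (θ : ℝ) (f' : E → E) (x : E) : ℝ :=
  ∫ y, ⟪f' (cos θ • x + sin θ • y), -sin θ • x + cos θ • y⟫ ∂stdGaussian E

theorem mehler_pi_div_two (f : E → F) (x : E) : mehler (π / 2) f x = ∫ y, f y ∂stdGaussian E := by
  simp [mehler]

variable [BorelSpace E]

theorem mehler_zero [CompleteSpace F] (f : E → F) : mehler 0 f = f := by
  ext x
  simp [mehler]

theorem integrable_comp_smul_add_smul_stdGaussian {G : Type*} [NormedAddCommGroup G] {f : E → G}
    {K : ℝ≥0} (hf : LipschitzWith K f) (c s : ℝ) (x : E) :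
    Integrable (fun y => f (c • x + s • y)) (stdGaussian E) := by
  have haffine : MemLp (fun y : E => c • x + s • y) 1 (stdGaussian E) :=
    (memLp_const (c • x)).add
      ((IsGaussian.memLp_id (stdGaussian E) 1 ENNReal.one_ne_top).const_smul s)
  exact memLp_one_iff_integrable.1 (memLp_comp_of_lipschitzWith hf haffine)

theorem norm_mehler_le {G : E → F} {K : ℝ} (hG : ∀ x, ‖G x‖ ≤ K) (θ : ℝ) (x : E) :
    ‖mehler θ G x‖ ≤ K := by
  simpa [mehler] using norm_integral_le_of_norm_le_const (μ := stdGaussian E)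
    (.of_forall fun y => hG (cos θ • x + sin θ • y))

theorem le_mehler {f : E → ℝ} {a : ℝ} {K : ℝ≥0} (hf : LipschitzWith K f) (haf : ∀ x, a ≤ f x)
    (θ : ℝ) (x : E) : a ≤ mehler θ f x := by
  simpa [mehler] using integral_mono (integrable_const a)
    (integrable_comp_smul_add_smul_stdGaussian hf (cos θ) (sin θ) x) fun y => haf _

theorem continuous_mehler {G : E → F} {K : ℝ} (hGc : Continuous G) (hG : ∀ x, ‖G x‖ ≤ K) (θ : ℝ) :
    Continuous (mehler θ G) :=
  continuous_of_dominated (fun x => Continuous.aestronglyMeasurable (by fun_prop))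
    (fun x => .of_forall fun y => hG _) (integrable_const K) (.of_forall fun y => by fun_prop)

theorem integrable_mul_add_norm_stdGaussian (c r : ℝ) :
    Integrable (fun y : E => c * (r + ‖y‖)) (stdGaussian E) :=
  ((integrable_const _).add IsGaussian.integrable_id.norm).const_mul _

theorem norm_integral_stdGaussian_le {g : E → F} {c r : ℝ} (hg : ∀ y, ‖g y‖ ≤ c * (r + ‖y‖)) :
    ‖∫ y, g y ∂stdGaussian E‖ ≤ c * (r + ∫ y : E, ‖y‖ ∂stdGaussian E) := by
  calc ‖∫ y, g y ∂stdGaussian E‖ ≤ ∫ y : E, c * (r + ‖y‖) ∂stdGaussian E :=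
        norm_integral_le_of_norm_le (integrable_mul_add_norm_stdGaussian c r) (.of_forall hg)
    _ = c * (r + ∫ y : E, ‖y‖ ∂stdGaussian E) := by
        have hnorm : Integrable (fun y : E => ‖y‖) (stdGaussian E) := IsGaussian.integrable_id.norm
        rw [integral_const_mul, integral_add (integrable_const _) hnorm]
        simp

theorem norm_mehler_sub_le [CompleteSpace F] {f : E → F} {K : ℝ≥0} (hf : LipschitzWith K f) (θ : ℝ)
    (x : E) : ‖mehler θ f x - f 0‖ ≤ K * (‖x‖ + ∫ y : E, ‖y‖ ∂stdGaussian E) := by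
  have hi := integrable_comp_smul_add_smul_stdGaussian hf (cos θ) (sin θ) x
  have hsub : mehler θ f x - f 0 = ∫ y, (f (cos θ • x + sin θ • y) - f 0) ∂stdGaussian E := by
    rw [integral_sub hi (integrable_const _)]
    simp [mehler]
  rw [hsub]
  refine norm_integral_stdGaussian_le fun y => ?_
  grw [hf.norm_sub_le, sub_zero, norm_cos_smul_add_sin_smul_le]

theorem integral_mehler [CompleteSpace F] {g : E → F} (hg : Integrable g (stdGaussian E)) (θ : ℝ) :
    ∫ x, mehler θ g x ∂stdGaussian E = ∫ x, g x ∂stdGaussian E := by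
  have hfst : Integrable (fun p : E × E => g p.1) ((stdGaussian E).prod (stdGaussian E)) :=
    hg.comp_fst _
  have hrot := (measurePreserving_rotation_stdGaussian θ).integrable_comp_of_integrable hfst
  calc ∫ x, mehler θ g x ∂stdGaussian E
      = ∫ p, g (ContinuousLinearMap.rotation θ p).1 ∂(stdGaussian E).prod (stdGaussian E) :=
        (integral_prod _ hrot).symm
    _ = ∫ p, g p.1 ∂(stdGaussian E).prod (stdGaussian E) :=
        integral_comp_rotation_stdGaussian θ hfst.aestronglyMeasurable
    _ = ∫ x, g x ∂stdGaussian E := by rw [integral_fun_fst]; simp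

theorem hasGradientAt_mehler {f : E → ℝ} {f' : E → E} {K : ℝ≥0}
    (hf : HasBoundedContGradient f f' K) (θ : ℝ) (x : E) :
    HasGradientAt (mehler θ f) (cos θ • mehler θ f' x) x := by
  have hc := hf.continuous
  have hc' := hf.continuous_gradient
  have hderiv (y x : E) : HasFDerivAt (fun x => f (cos θ • x + sin θ • y))
      (toDual ℝ E (cos θ • f' (cos θ • x + sin θ • y))) x := by
    simpa only [add_comm] using
      ((hf.comp_add_smul (sin θ • y) (cos θ)).hasGradientAt x).hasFDerivAt
  have h := hasFDerivAt_integral_of_dominated_of_fderiv_le (μ := stdGaussian E)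
    (bound := fun _ => (K : ℝ)) univ_mem
    (.of_forall fun x => Continuous.aestronglyMeasurable (by fun_prop))
    (integrable_comp_smul_add_smul_stdGaussian hf.lipschitzWith (cos θ) (sin θ) x)
    (Continuous.aestronglyMeasurable (by fun_prop))
    (.of_forall fun y x _ => by
      rw [LinearIsometryEquiv.norm_map, norm_smul, norm_eq_abs]
      grw [abs_cos_le_one, one_mul, hf.norm_gradient_le])
    (integrable_const _) (.of_forall fun y x _ => hderiv y x)
  refine hasGradientAt_iff_hasFDerivAt.2 (h.congr_fderiv ?_)
  rw [mehler, ← integral_smul]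
  exact (toDual ℝ E).toContinuousLinearEquiv.integral_comp_comm _

theorem HasBoundedContGradient.mehler {f : E → ℝ} {f' : E → E} {K : ℝ≥0}
    (hf : HasBoundedContGradient f f' K) (θ : ℝ) :
    HasBoundedContGradient (mehler θ f) (fun x => cos θ • mehler θ f' x) K where
  hasGradientAt := hasGradientAt_mehler hf θ
  continuous_gradient :=
    (continuous_mehler hf.continuous_gradient hf.norm_gradient_le θ).const_smul _
  norm_gradient_le x := by
    rw [norm_smul, norm_eq_abs]
    grw [abs_cos_le_one, one_mul, norm_mehler_le hf.norm_gradient_le]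

theorem norm_mehlerDeriv_le {V : E → E} {K : ℝ≥0} (hV : ∀ x, ‖V x‖ ≤ K) (θ : ℝ) (x : E) :
    ‖mehlerDeriv θ V x‖ ≤ K * (‖x‖ + ∫ y : E, ‖y‖ ∂stdGaussian E) :=
  norm_integral_stdGaussian_le fun y => abs_inner_rotation_le hV θ x y

theorem hasDerivAt_mehler {f : E → ℝ} {f' : E → E} {K : ℝ≥0}
    (hf : HasBoundedContGradient f f' K) (θ : ℝ) (x : E) :
    HasDerivAt (fun θ => mehler θ f x) (mehlerDeriv θ f' x) θ := by
  have hc := hf.continuous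
  have hc' := hf.continuous_gradient
  have hrot (y : E) (θ : ℝ) :
      HasDerivAt (fun θ => cos θ • x + sin θ • y) (-sin θ • x + cos θ • y) θ :=
    ((hasDerivAt_cos θ).smul_const x).add ((hasDerivAt_sin θ).smul_const y)
  refine (hasDerivAt_integral_of_dominated_loc_of_deriv_le (μ := stdGaussian E)
    (F := fun θ y => f (cos θ • x + sin θ • y))
    (F' := fun θ y => ⟪f' (cos θ • x + sin θ • y), -sin θ • x + cos θ • y⟫)
    (bound := fun y => K * (‖x‖ + ‖y‖)) univ_mem
    (.of_forall fun θ => Continuous.aestronglyMeasurable (by fun_prop))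
    (integrable_comp_smul_add_smul_stdGaussian hf.lipschitzWith _ _ x)
    (Continuous.aestronglyMeasurable (by fun_prop))
    (.of_forall fun y θ _ => abs_inner_rotation_le hf.norm_gradient_le θ x y)
    (integrable_mul_add_norm_stdGaussian K ‖x‖)
    (.of_forall fun y θ _ => ?_)).2
  simpa [Function.comp_def] using (hf.hasGradientAt _).hasFDerivAt.comp_hasDerivAt θ (hrot y θ)

theorem integral_mul_mehlerDeriv {h : E → ℝ} {h' V : E → E} {K L : ℝ≥0}
    (hh : HasBoundedContGradient h h' L) (hV : Continuous V) (hK : ∀ x, ‖V x‖ ≤ K) (θ : ℝ) :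
    ∫ x, h x * mehlerDeriv θ V x ∂stdGaussian E =
      -sin θ * ∫ x, ⟪h' x, mehler θ V x⟫ ∂stdGaussian E := by
  have hi : Integrable (fun p : E × E => ⟪h' p.1, V (ContinuousLinearMap.rotation θ p).1⟫)
      ((stdGaussian E).prod (stdGaussian E)) := by
    have hc := hh.continuous_gradient
    exact integrable_inner_of_continuous_of_norm_le (by fun_prop)
      (fun p => hh.norm_gradient_le _) (by fun_prop) fun p => hK _
  have hVi (x : E) : Integrable (fun y => V (cos θ • x + sin θ • y)) (stdGaussian E) :=
    integrable_of_continuous_of_norm_le (by fun_prop) fun y => hK _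
  have hparts := integral_mul_inner_rotation_stdGaussian hh hV hK θ
  rw [integral_prod _ (integrable_mul_inner_rotation_stdGaussian hh.lipschitzWith hV hK θ),
    integral_prod _ hi] at hparts
  simpa only [mehler, mehlerDeriv, ContinuousLinearMap.rotation_apply, integral_const_mul,
    integral_inner (hVi _)] using hparts

end Mehler

section LogSobolev

variable {E : Type*} [NormedAddCommGroup E] [InnerProductSpace ℝ E] [FiniteDimensional ℝ E]
  [MeasurableSpace E] [BorelSpace E] {f : E → ℝ} {f' : E → E} {K a : ℝ≥0}

theorem integrable_mul_log_stdGaussian (hf : HasBoundedContGradient f f' K) (ha : 0 < a)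
    (haf : ∀ x, a ≤ f x) : Integrable (fun x => f x * log (f x)) (stdGaussian E) :=
  hf.memLp_two.integrable_mul (hf.log ha haf).memLp_two

theorem abs_log_mehler_le (hf : HasBoundedContGradient f f' K) (ha : 0 < a) (haf : ∀ x, a ≤ f x)
    (θ : ℝ) (x : E) :
    |log (mehler θ f x)| ≤ |log (f 0)| + K / a * (‖x‖ + ∫ y : E, ‖y‖ ∂stdGaussian E) := by
  calc |log (mehler θ f x)|
      ≤ |log (f 0)| + |log (mehler θ f x) - log (f 0)| := by
        rw [add_comm]
        exact sub_le_iff_le_add.1 (abs_sub_abs_le_abs_sub _ _)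
    _ ≤ |log (f 0)| + |mehler θ f x - f 0| / a := by
        grw [abs_log_sub_log_le (NNReal.coe_pos.2 ha) (le_mehler hf.lipschitzWith haf θ x) (haf 0)]
    _ ≤ |log (f 0)| + K / a * (‖x‖ + ∫ y : E, ‖y‖ ∂stdGaussian E) := by
        rw [← norm_eq_abs (mehler θ f x - f 0), div_mul_eq_mul_div]
        grw [norm_mehler_sub_le hf.lipschitzWith]

theorem aestronglyMeasurable_mehlerDeriv {V : E → E} (hV : Continuous V) (θ : ℝ) (μ : Measure E) :
    AEStronglyMeasurable (mehlerDeriv θ V) μ := by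
  have hc : Continuous fun p : E × E =>
      ⟪V (cos θ • p.1 + sin θ • p.2), -sin θ • p.1 + cos θ • p.2⟫ := by fun_prop
  exact hc.stronglyMeasurable.integral_prod_right'.aestronglyMeasurable

theorem integral_log_mul_mehlerDeriv (hf : HasBoundedContGradient f f' K) (ha : 0 < a)
    (haf : ∀ x, a ≤ f x) (θ : ℝ) :
    ∫ x, (log (mehler θ f x) + 1) * mehlerDeriv θ f' x ∂stdGaussian E =
      -(sin θ * cos θ) * ∫ x, ‖mehler θ f' x‖ ^ 2 / mehler θ f x ∂stdGaussian E := by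
  have hlog := ((hf.mehler θ).log ha (le_mehler hf.lipschitzWith haf θ)).add_const 1
  rw [integral_mul_mehlerDeriv hlog hf.continuous_gradient hf.norm_gradient_le,
    ← integral_const_mul, ← integral_const_mul]
  refine integral_congr_ae (.of_forall fun x => ?_)
  simp only [real_inner_smul_left, real_inner_self_eq_norm_sq]
  ring

theorem hasDerivAt_integral_mehler_mul_log (hf : HasBoundedContGradient f f' K) (ha : 0 < a)
    (haf : ∀ x, a ≤ f x) (θ : ℝ) :
    HasDerivAt (fun θ => ∫ x, mehler θ f x * log (mehler θ f x) ∂stdGaussian E)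
      (-(sin θ * cos θ) * ∫ x, ‖mehler θ f' x‖ ^ 2 / mehler θ f x ∂stdGaussian E) θ := by
  have hpos (θ : ℝ) (x : E) : mehler θ f x ≠ 0 :=
    ((NNReal.coe_pos.2 ha).trans_le (le_mehler hf.lipschitzWith haf θ x)).ne'
  have hint (θ : ℝ) := integrable_mul_log_stdGaussian (hf.mehler θ) ha
    (le_mehler hf.lipschitzWith haf θ)
  set m := ∫ y : E, ‖y‖ ∂stdGaussian E
  have hbound (c d : ℝ) : MemLp (fun x : E => c + d * (‖x‖ + m)) 2 (stdGaussian E) :=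
    (memLp_const c).add ((((IsGaussian.memLp_id _ 2 ENNReal.ofNat_ne_top).norm).add
      (memLp_const m)).const_mul d)
  have hderiv (θ : ℝ) (x : E) : HasDerivAt (fun θ => mehler θ f x * log (mehler θ f x))
      ((log (mehler θ f x) + 1) * mehlerDeriv θ f' x) θ :=
    HasDerivAt.comp (h₂ := fun u => u * log u) θ (hasDerivAt_mul_log (hpos θ x))
      (hasDerivAt_mehler hf θ x)
  rw [← integral_log_mul_mehlerDeriv hf ha haf]
  refine (hasDerivAt_integral_of_dominated_loc_of_deriv_le
    (bound := fun x => (|log (f 0)| + 1 + K / a * (‖x‖ + m)) * (0 + K * (‖x‖ + m))) univ_mem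
    (.of_forall fun θ => (hint θ).aestronglyMeasurable) (hint θ) ?_
    (.of_forall fun x θ _ => ?_)
    ((hbound _ _).integrable_mul (hbound _ _)) (.of_forall fun x θ _ => hderiv θ x)).2
  · have hlog := ((hf.mehler θ).log ha (le_mehler hf.lipschitzWith haf θ)).add_const 1
    exact hlog.continuous.aestronglyMeasurable.mul
      (aestronglyMeasurable_mehlerDeriv hf.continuous_gradient θ _)
  · rw [norm_mul, norm_eq_abs]
    grw [abs_add_le, abs_log_mehler_le hf ha haf, norm_mehlerDeriv_le hf.norm_gradient_le, abs_one]
    apply le_of_eq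
    ring

theorem integral_sq_norm_mehler_div_le (hf : HasBoundedContGradient f f' K) (ha : 0 < a)
    (haf : ∀ x, a ≤ f x) (θ : ℝ) :
    ∫ x, ‖mehler θ f' x‖ ^ 2 / mehler θ f x ∂stdGaussian E ≤
      ∫ x, ‖f' x‖ ^ 2 / f x ∂stdGaussian E := by
  have hpos (x : E) : 0 < f x := (NNReal.coe_pos.2 ha).trans_le (haf x)
  have hpos' (x : E) : 0 < mehler θ f x :=
    (NNReal.coe_pos.2 ha).trans_le (le_mehler hf.lipschitzWith haf θ x)
  have hc := hf.continuous_gradient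
  have hFc := hf.continuous_sq_norm_gradient_div ha haf
  have hFb := hf.norm_sq_norm_gradient_div_le ha haf
  calc ∫ x, ‖mehler θ f' x‖ ^ 2 / mehler θ f x ∂stdGaussian E
      ≤ ∫ x, mehler θ (fun x => ‖f' x‖ ^ 2 / f x) x ∂stdGaussian E := by
        refine integral_mono_of_nonneg
          (.of_forall fun x => div_nonneg (sq_nonneg _) (hpos' x).le)
          (integrable_of_continuous_of_norm_le (continuous_mehler hFc hFb θ)
            (norm_mehler_le hFb θ)) (.of_forall fun x => ?_)
        exact sq_norm_integral_div_integral_le (fun y => hpos _)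
          (integrable_of_continuous_of_norm_le (by fun_prop) fun y => hf.norm_gradient_le _)
          (integrable_comp_smul_add_smul_stdGaussian hf.lipschitzWith _ _ x)
          (integrable_of_continuous_of_norm_le (hFc.comp (by fun_prop)) fun y => hFb _)
    _ = ∫ x, ‖f' x‖ ^ 2 / f x ∂stdGaussian E :=
        integral_mehler (integrable_of_continuous_of_norm_le hFc hFb) θ

theorem logSobolev_stdGaussian (hf : HasBoundedContGradient f f' K) (ha : 0 < a)
    (haf : ∀ x, a ≤ f x) :
    ∫ x, f x * log (f x) ∂stdGaussian E -
        (∫ x, f x ∂stdGaussian E) * log (∫ x, f x ∂stdGaussian E) ≤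
      1 / 2 * ∫ x, ‖f' x‖ ^ 2 / f x ∂stdGaussian E := by
  set I := ∫ x, ‖f' x‖ ^ 2 / f x ∂stdGaussian E
  let ψ (θ : ℝ) := ∫ x, mehler θ f x * log (mehler θ f x) ∂stdGaussian E + sin θ ^ 2 / 2 * I
  have hψ (θ : ℝ) : HasDerivAt ψ (sin θ * cos θ *
      (I - ∫ x, ‖mehler θ f' x‖ ^ 2 / mehler θ f x ∂stdGaussian E)) θ :=
    ((hasDerivAt_integral_mehler_mul_log hf ha haf θ).add
      ((((hasDerivAt_sin θ).pow 2).div_const 2).mul_const I)).congr_deriv (by ring)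
  have hmono : MonotoneOn ψ (Set.Icc 0 (π / 2)) := by
    refine monotoneOn_of_hasDerivWithinAt_nonneg (convex_Icc _ _)
      (fun θ _ => (hψ θ).continuousAt.continuousWithinAt)
      (fun θ _ => (hψ θ).hasDerivWithinAt) fun θ hθ => ?_
    rw [interior_Icc] at hθ
    exact mul_nonneg (mul_nonneg (sin_pos_of_pos_of_lt_pi hθ.1 (by linarith [hθ.2, pi_pos])).le
      (cos_pos_of_mem_Ioo ⟨by linarith [hθ.1, pi_pos], hθ.2⟩).le)
      (sub_nonneg.2 (integral_sq_norm_mehler_div_le hf ha haf θ))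
  have h := hmono (Set.left_mem_Icc.2 (by positivity)) (Set.right_mem_Icc.2 (by positivity))
    (by positivity)
  simp only [ψ, mehler_zero, mehler_pi_div_two, sin_zero, sin_pi_div_two, integral_const,
    probReal_univ, one_smul] at h
  linarith

theorem logSobolev_stdGaussian_comp_add_smul (hf : HasBoundedContGradient f f' K) (ha : 0 < a)
    (haf : ∀ x, a ≤ f x) (v : E) (s : ℝ) :
    ∫ y, f (v + s • y) * log (f (v + s • y)) ∂stdGaussian E -
        (∫ y, f (v + s • y) ∂stdGaussian E) * log (∫ y, f (v + s • y) ∂stdGaussian E) ≤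
      s ^ 2 / 2 * ∫ y, ‖f' (v + s • y)‖ ^ 2 / f (v + s • y) ∂stdGaussian E := by
  calc _ ≤ 1 / 2 * ∫ y, ‖s • f' (v + s • y)‖ ^ 2 / f (v + s • y) ∂stdGaussian E :=
        logSobolev_stdGaussian (hf.comp_add_smul v s) ha fun y => haf _
    _ = _ := by
        simp only [norm_smul, mul_pow, norm_eq_abs, sq_abs, mul_div_assoc, integral_const_mul]
        ring

end LogSobolev

theorem gaussianMeasure_eq_stdGaussian (n : ℕ) :
    gaussianMeasure n = stdGaussian (EuclideanSpace ℝ (Fin n)) := by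
  simp only [stdGaussian_eq_withDensity, gaussianMeasure, stdGaussianPDFReal,
    finrank_euclideanSpace_fin]

theorem local_logSobolev_OU_general (n : ℕ) (f : EuclideanSpace ℝ (Fin n) → ℝ)
    (hf : ContDiff ℝ 1 f) (a : ℝ) (ha : 0 < a) (haf : ∀ x, a ≤ f x)
    (C : ℝ) (hgrad : ∀ x, ‖gradient f x‖ ≤ C)
    (t : ℝ) (ht : 0 ≤ t) (x : EuclideanSpace ℝ (Fin n)) :
    OU n t (fun y => f y * Real.log (f y)) x - OU n t f x * Real.log (OU n t f x) ≤
      (1 - Real.exp (-2 * t)) / 2 * OU n t (fun y => ‖gradient f y‖ ^ 2 / f y) x := by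
  have hexp : rexp (-2 * t) ≤ 1 := exp_le_one_iff.2 (by linarith)
  lift a to ℝ≥0 using ha.le
  lift C to ℝ≥0 using (norm_nonneg _).trans (hgrad 0)
  have h := logSobolev_stdGaussian_comp_add_smul (.of_contDiff hf hgrad) (NNReal.coe_pos.1 ha) haf
    (rexp (-t) • x) √(1 - rexp (-2 * t))
  rwa [sq_sqrt (sub_nonneg.2 hexp), ← gaussianMeasure_eq_stdGaussian] at h

theorem local_logSobolev_OU (n : ℕ) (hn : 1 ≤ n)
    (f : EuclideanSpace ℝ (Fin n) → ℝ) (hf : ContDiff ℝ (⊤ : ℕ∞) f)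
    (a b : ℝ) (ha : 0 < a) (hab : ∀ x, a ≤ f x ∧ f x ≤ b)
    (C : ℝ) (hgrad : ∀ x, ‖gradient f x‖ ≤ C)
    (t : ℝ) (ht : 0 ≤ t) (x : EuclideanSpace ℝ (Fin n)) :
    OU n t (fun y => f y * Real.log (f y)) x - OU n t f x * Real.log (OU n t f x) ≤
      (1 - Real.exp (-2 * t)) / 2 * OU n t (fun y => ‖gradient f y‖ ^ 2 / f y) x :=
  local_logSobolev_OU_general n f (hf.of_le (by exact_mod_cast le_top)) a ha (fun x => (hab x).1)
    C hgrad t ht x
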